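/- Let τ ∈ R(T). Then for every g ∈ H the Fredholm partial integral equation of the second kind f − τ(T₁+T₂)f = g has a unique solution f ∈ H. -/

import Mathlib

open MeasureTheory Complex

noncomputable section

/-- The measure on `ℝ` given by restricting Lebesgue measure to `[a,b]`. -/
abbrev muI (a b : ℝ) : MeasureTheory.Measure ℝ :=
  MeasureTheory.volume.restrict (Set.Icc a b)

/-! The equation is solved by the factorization
`1 - τ (T₁ + T₂) = (1 - τ T₁) (1 - τ T₂) (1 - τ² W₁)`.

The first two factors are invertible because `τ⁻¹` lies in both resolvent sets, and the third one
by the Fredholm alternative: `W₁ = (1 - τ T₂)⁻¹ (1 - τ T₁)⁻¹ T₁ T₂` is compact because `T₁ T₂` has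
finite rank. The latter holds because `T₁ f` depends only on the partial inner products of `f` with
the `φ k`, and those of `T₂ f` lie in the span of the `ψ j`. The factorization itself rests on
`(1 - τ T₁) S₁ = T₁`, which is checked on partial inner products. -/

section Operators

theorem isUnit_one_sub_smul_of_inv_mem_resolventSet {K A : Type*} [Field K] [Ring A] [Algebra K A]
    {t : K} (ht : t ≠ 0) {a : A} (ha : t⁻¹ ∈ resolventSet K a) : IsUnit (1 - t • a) := by
  rw [spectrum.mem_resolventSet_iff, Algebra.algebraMap_eq_smul_one] at ha
  lift t to Kˣ using ht.isUnit
  simpa only [inv_inv, Units.smul_def] using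
    (IsUnit.smul_sub_iff_sub_inv_smul t⁻¹ a).1
      (by simpa only [Units.smul_def, Units.val_inv_eq_inv_val] using ha)

theorem one_sub_smul_add_eq_mul {R A : Type*} [CommRing R] [Ring A] [Algebra R A] {t : R}
    {a b s w : A} (hs : (1 - t • a) * s = a) (hw : (1 - t • b) * w = s * b) :
    1 - t • (a + b) = (1 - t • a) * ((1 - t • b) * (1 - t ^ 2 • w)) := by
  calc 1 - t • (a + b) = (1 - t • a) * (1 - t • b) - t ^ 2 • (a * b) := by
        simp only [mul_sub, sub_mul, one_mul, mul_one, smul_mul_assoc, mul_smul_comm]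
        module
    _ = (1 - t • a) * (1 - t • b) - t ^ 2 • ((1 - t • a) * ((1 - t • b) * w)) := by
        rw [hw, ← mul_assoc, hs]
    _ = (1 - t • a) * ((1 - t • b) * (1 - t ^ 2 • w)) := by
        rw [mul_sub (1 - t • b), mul_one, mul_sub _ (1 - t • b), mul_smul_comm, mul_smul_comm]

variable {𝕜 E : Type*} [NontriviallyNormedField 𝕜] [NormedAddCommGroup E] [NormedSpace 𝕜 E]

theorem isCompactOperator_of_forall_mem {F : Type*} [NormedAddCommGroup F] [NormedSpace 𝕜 F]
    [ProperSpace 𝕜] (T : E →L[𝕜] F) (V : Submodule 𝕜 F) [FiniteDimensional 𝕜 V]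
    (hT : ∀ x, T x ∈ V) : IsCompactOperator T := by
  have : ProperSpace V := FiniteDimensional.proper 𝕜 V
  exact (isCompactOperator_of_locallyCompactSpace_dom (T.codRestrict V hT)).clm_comp V.subtypeL

theorem isUnit_one_sub_of_isCompactOperator [CompleteSpace E] {T : E →L[𝕜] E}
    (hT : IsCompactOperator T) (hfix : ∀ x, T x = x → x = 0) : IsUnit (1 - T) := by
  have hnot : ¬ Module.End.HasEigenvalue (T : Module.End 𝕜 E) 1 := by
    intro h
    obtain ⟨x, hx⟩ := h.exists_hasEigenvector
    exact hx.2 (hfix x (by simpa using hx.apply_eq_smul))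
  simpa [spectrum.mem_resolventSet_iff] using
    (hT.hasEigenvalue_or_mem_resolventSet one_ne_zero).resolve_left hnot

theorem isCompactOperator_of_mul_left {U T : E →L[𝕜] E} (hU : IsUnit U)
    (h : IsCompactOperator (U * T)) : IsCompactOperator T := by
  obtain ⟨u, rfl⟩ := hU
  have hT : T = ↑u⁻¹ * (u * T) := (u.inv_mul_cancel_left T).symm
  rw [hT]
  exact h.clm_comp (u⁻¹).val

theorem isUnit_one_sub_smul_add [CompleteSpace E] {t : 𝕜} {A B S W : E →L[𝕜] E}
    (hA : IsUnit (1 - t • A)) (hB : IsUnit (1 - t • B)) (hS : (1 - t • A) * S = A)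
    (hW : (1 - t • B) * W = S * B) (hAB : IsCompactOperator (A * B))
    (hfix : ∀ x, (t ^ 2 • W) x = x → x = 0) : IsUnit (1 - t • (A + B)) := by
  have hW' : IsCompactOperator W := by
    refine isCompactOperator_of_mul_left (hA.mul hB) ?_
    rwa [mul_assoc, hW, ← mul_assoc, hS]
  rw [one_sub_smul_add_eq_mul hS hW]
  exact hA.mul (hB.mul (isUnit_one_sub_of_isCompactOperator (hW'.smul (t ^ 2)) hfix))

end Operators

section PartialInner

variable {𝕜 α β : Type*} [RCLike 𝕜] [MeasurableSpace α] [MeasurableSpace β]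
  {μ : Measure α} {ν : Measure β}

/-- The partial inner product of `u : α → 𝕜` with `f : α × β → 𝕜` in the first variable, a function
of the second variable; it is conjugate-linear in `u`. -/
def partialInnerFst (μ : Measure α) (u : α → 𝕜) (f : α × β → 𝕜) (y : β) : 𝕜 :=
  ∫ s, star (u s) * f (s, y) ∂μ

/-- The partial inner product of `v : β → 𝕜` with `f : α × β → 𝕜` in the second variable, a function
of the first variable; it is conjugate-linear in `v`. -/
def partialInnerSnd (ν : Measure β) (v : β → 𝕜) (f : α × β → 𝕜) (x : α) : 𝕜 :=
  ∫ t, star (v t) * f (x, t) ∂ν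

theorem integral_sum_mul_star_mul {ι : Type*} [Fintype ι] {φ : ι → α → 𝕜} {g : α → 𝕜}
    (hg : ∀ k, Integrable (fun s => star (φ k s) * g s) μ) (c : ι → 𝕜) :
    ∫ s, (∑ k, c k * star (φ k s)) * g s ∂μ = ∑ k, c k * ∫ s, star (φ k s) * g s ∂μ := by
  simp only [Finset.sum_mul, mul_assoc]
  rw [integral_finsetSum _ fun k _ => (hg k).const_mul (c k)]
  simp only [integral_const_mul]

theorem coeFn_sum_smul_toLp {ι : Type*} [Fintype ι] {p : ENNReal} {f : ι → α → 𝕜}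
    (hf : ∀ i, MemLp (f i) p μ) (c : ι → 𝕜) :
    ⇑(∑ i, c i • (hf i).toLp (f i)) =ᵐ[μ] fun x => ∑ i, c i * f i x := by
  have hsmul : ∀ᵐ x ∂μ, ∀ i, (c i • (hf i).toLp (f i)) x = c i * f i x := ae_all_iff.2 fun i => by
    filter_upwards [Lp.coeFn_smul (c i) ((hf i).toLp (f i)), (hf i).coeFn_toLp] with x h₁ h₂
    rw [h₁, Pi.smul_apply, h₂, smul_eq_mul]
  filter_upwards [Lp.coeFn_finsetSum Finset.univ fun i => c i • (hf i).toLp (f i), hsmul]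
    with x hsum hx
  rw [hsum, Finset.sum_apply]
  exact Finset.sum_congr rfl fun i _ => hx i

theorem memLp_mul_prod {p : ENNReal} (hp : p ≠ 0) (hp' : p ≠ ⊤) {u : α → 𝕜} {v : β → 𝕜}
    (hu : MemLp u p μ) (hv : MemLp v p ν) :
    MemLp (fun z : α × β => u z.1 * v z.2) p (μ.prod ν) := by
  have hm : AEStronglyMeasurable (fun z : α × β => u z.1 * v z.2) (μ.prod ν) :=
    hu.1.comp_fst.mul hv.1.comp_snd
  rw [← integrable_norm_rpow_iff hm hp hp']
  simpa only [norm_mul, Real.mul_rpow (norm_nonneg _) (norm_nonneg _)] using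
    (hu.integrable_norm_rpow hp hp').mul_prod (hv.integrable_norm_rpow hp hp')

variable [SFinite ν]

theorem integrable_star_mul_partialInnerSnd {u : α → 𝕜} (hu : MemLp u 2 μ) {v : β → 𝕜}
    (hv : MemLp v 2 ν) {f : α × β → 𝕜} (hf : MemLp f 2 (μ.prod ν)) :
    Integrable (fun s => star (u s) * partialInnerSnd ν v f s) μ := by
  have huv : MemLp (fun z : α × β => star (u z.1) * star (v z.2)) 2 (μ.prod ν) :=
    memLp_mul_prod two_ne_zero ENNReal.ofNat_ne_top hu.star hv.star
  refine (huv.integrable_mul hf).integral_prod_left.congr (.of_forall fun s => ?_)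
  simp only [Pi.mul_apply, mul_assoc, integral_const_mul, partialInnerSnd]

variable [SFinite μ]

theorem ae_ae_of_ae_prod_swap {q : α × β → Prop} (hq : ∀ᵐ z ∂μ.prod ν, q z) :
    ∀ᵐ y ∂ν, ∀ᵐ x ∂μ, q (x, y) :=
  Measure.ae_ae_of_ae_prod (Measure.measurePreserving_swap.quasiMeasurePreserving.ae hq)

theorem ae_memLp_prodMk_left {F : Type*} [NormedAddCommGroup F] {p : ENNReal} (hp : p ≠ 0)
    (hp' : p ≠ ⊤) {f : α × β → F} (hf : MemLp f p (μ.prod ν)) :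
    ∀ᵐ x ∂μ, MemLp (fun y => f (x, y)) p ν := by
  filter_upwards [hf.aestronglyMeasurable.prodMk_left,
    ((integrable_norm_rpow_iff hf.aestronglyMeasurable hp hp').2 hf).prod_right_ae] with x hm hi
  exact (integrable_norm_rpow_iff hm hp hp').1 hi

theorem ae_memLp_prodMk_right {F : Type*} [NormedAddCommGroup F] {p : ENNReal} (hp : p ≠ 0)
    (hp' : p ≠ ⊤) {f : α × β → F} (hf : MemLp f p (μ.prod ν)) :
    ∀ᵐ y ∂ν, MemLp (fun x => f (x, y)) p μ :=
  ae_memLp_prodMk_left hp hp' (hf.comp_measurePreserving Measure.measurePreserving_swap)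

theorem ae_integrable_star_mul_fst {u : α → 𝕜} (hu : MemLp u 2 μ) {f : α × β → 𝕜}
    (hf : MemLp f 2 (μ.prod ν)) : ∀ᵐ y ∂ν, Integrable (fun s => star (u s) * f (s, y)) μ := by
  filter_upwards [ae_memLp_prodMk_right two_ne_zero ENNReal.ofNat_ne_top hf] with y hy
  exact hu.star.integrable_mul hy

theorem ae_integrable_star_mul_snd {v : β → 𝕜} (hv : MemLp v 2 ν) {f : α × β → 𝕜}
    (hf : MemLp f 2 (μ.prod ν)) : ∀ᵐ x ∂μ, Integrable (fun t => star (v t) * f (x, t)) ν := by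
  filter_upwards [ae_memLp_prodMk_left two_ne_zero ENNReal.ofNat_ne_top hf] with x hx
  exact hv.star.integrable_mul hx

theorem partialInnerFst_congr_ae (u : α → 𝕜) {f g : α × β → 𝕜} (hfg : f =ᵐ[μ.prod ν] g) :
    partialInnerFst μ u f =ᵐ[ν] partialInnerFst μ u g := by
  filter_upwards [ae_ae_of_ae_prod_swap hfg] with y hy
  refine integral_congr_ae ?_
  filter_upwards [hy] with s hs
  rw [hs]

theorem partialInnerFst_sub_smul {u : α → 𝕜} (hu : MemLp u 2 μ) (f g : Lp 𝕜 2 (μ.prod ν)) (c : 𝕜) :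
    partialInnerFst μ u ⇑(f - c • g : Lp 𝕜 2 (μ.prod ν)) =ᵐ[ν]
      fun y => partialInnerFst μ u f y - c * partialInnerFst μ u g y := by
  have hfg : ⇑(f - c • g) =ᵐ[μ.prod ν] fun z => f z - c * g z := by
    filter_upwards [Lp.coeFn_sub f (c • g), Lp.coeFn_smul c g] with z hsub hsmul
    rw [hsub, Pi.sub_apply, hsmul, Pi.smul_apply, smul_eq_mul]
  filter_upwards [partialInnerFst_congr_ae u hfg, ae_integrable_star_mul_fst hu (Lp.memLp f),
    ae_integrable_star_mul_fst hu (Lp.memLp g)] with y hy hf hg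
  rw [hy]
  simp only [partialInnerFst, mul_sub, mul_left_comm _ c]
  rw [integral_sub hf (hg.const_mul c), integral_const_mul]

theorem partialInnerFst_of_ae_eq_sum {ι : Type*} [Fintype ι] {u : α → 𝕜} {v : ι → α → 𝕜}
    (huv : ∀ i, Integrable (fun s => star (u s) * v i s) μ) {w : ι → β → 𝕜} {f : α × β → 𝕜}
    (hf : f =ᵐ[μ.prod ν] fun z => ∑ i, v i z.1 * w i z.2) :
    partialInnerFst μ u f =ᵐ[ν] fun y => ∑ i, (∫ s, star (u s) * v i s ∂μ) * w i y := by
  filter_upwards [partialInnerFst_congr_ae u hf] with y hy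
  rw [hy]
  simp only [partialInnerFst, Finset.mul_sum, ← mul_assoc]
  rw [integral_finsetSum _ fun i _ => (huv i).mul_const (w i y)]
  simp only [integral_mul_const]

theorem partialInnerFst_of_ae_eq_sum_orthonormal {ι : Type*} [Fintype ι] [DecidableEq ι]
    {φ : ι → α → 𝕜} (hφ : ∀ k, MemLp (φ k) 2 μ)
    (hφON : ∀ i j, ∫ x, star (φ i x) * φ j x ∂μ = if i = j then 1 else 0) {w : ι → β → 𝕜}
    {f : α × β → 𝕜} (hf : f =ᵐ[μ.prod ν] fun z => ∑ i, φ i z.1 * w i z.2) (k : ι) :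
    partialInnerFst μ (φ k) f =ᵐ[ν] w k := by
  filter_upwards [partialInnerFst_of_ae_eq_sum (fun i => (hφ k).star.integrable_mul (hφ i)) hf]
    with y hy
  simpa only [hφON, ite_mul, one_mul, zero_mul, Finset.sum_ite_eq, Finset.mem_univ, if_true]
    using hy

end PartialInner

section PartialIntegral

variable {𝕜 α β ι κ : Type*} [RCLike 𝕜] [MeasurableSpace α] [MeasurableSpace β]
  [Fintype ι] [Fintype κ] {μ : Measure α} {ν : Measure β}

/-- `T` is the partial integral operator in the first variable with degenerate kernel
`∑ k, φ k x * star (φ k s) * h k y`, written through partial inner products. -/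
def IsPartialIntegralFst (φ : ι → α → 𝕜) (h : ι → β → 𝕜)
    (T : Lp 𝕜 2 (μ.prod ν) →L[𝕜] Lp 𝕜 2 (μ.prod ν)) : Prop :=
  ∀ f, T f =ᵐ[μ.prod ν] fun z => ∑ k, φ k z.1 * (h k z.2 * partialInnerFst μ (φ k) f z.2)

/-- `T` is the partial integral operator in the second variable with degenerate kernel
`∑ j, p j x * ψ j y * star (ψ j t)`, written through partial inner products. -/
def IsPartialIntegralSnd (p : κ → α → 𝕜) (ψ : κ → β → 𝕜)
    (T : Lp 𝕜 2 (μ.prod ν) →L[𝕜] Lp 𝕜 2 (μ.prod ν)) : Prop :=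
  ∀ f, T f =ᵐ[μ.prod ν] fun z => ∑ j, p j z.1 * partialInnerSnd ν (ψ j) f z.1 * ψ j z.2

variable {φ : ι → α → 𝕜} {h : ι → β → 𝕜} {p : κ → α → 𝕜} {ψ : κ → β → 𝕜}
  {A B S : Lp 𝕜 2 (μ.prod ν) →L[𝕜] Lp 𝕜 2 (μ.prod ν)}

theorem isPartialIntegralFst_of_projections
    {P : ι → (Lp 𝕜 2 (μ.prod ν) →L[𝕜] Lp 𝕜 2 (μ.prod ν))}
    (hP : ∀ k, ∀ f : Lp 𝕜 2 (μ.prod ν),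
      ∀ᵐ z ∂μ.prod ν, P k f z = φ k z.1 * ∫ s, star (φ k s) * f (s, z.2) ∂μ)
    (hA : ∀ f : Lp 𝕜 2 (μ.prod ν), ∀ᵐ z ∂μ.prod ν, A f z = ∑ k, h k z.2 * P k f z) :
    IsPartialIntegralFst φ h A := fun f => by
  filter_upwards [hA f, ae_all_iff.2 (hP · f)] with z hz hPz
  simp only [hz, hPz, partialInnerFst, mul_left_comm (h _ z.2)]

theorem IsPartialIntegralFst.apply_eq_apply (hA : IsPartialIntegralFst φ h A)
    {f g : Lp 𝕜 2 (μ.prod ν)}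
    (hfg : ∀ k, partialInnerFst μ (φ k) f =ᵐ[ν] partialInnerFst μ (φ k) g) : A f = A g := by
  refine Lp.ext ?_
  filter_upwards [hA f, hA g, Measure.quasiMeasurePreserving_snd.ae (ae_all_iff.2 hfg)]
    with z hf hg hz
  simp only [hf, hg, hz]

variable [SFinite μ] [SFinite ν]

theorem isPartialIntegralFst_of_kernel (hφ : ∀ k, MemLp (φ k) 2 μ)
    (hA : ∀ f : Lp 𝕜 2 (μ.prod ν), ∀ᵐ z ∂μ.prod ν,
      A f z = ∫ s, (∑ k, φ k z.1 * star (φ k s) * h k z.2) * f (s, z.2) ∂μ) :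
    IsPartialIntegralFst φ h A := fun f => by
  have hint := Measure.quasiMeasurePreserving_snd (μ := μ) |>.ae <| ae_all_iff.2 fun k =>
    ae_integrable_star_mul_fst (ν := ν) (hφ k) (Lp.memLp f)
  filter_upwards [hA f, hint] with z hz hi
  simp only [hz, mul_right_comm (φ _ z.1) _ (h _ z.2)]
  rw [integral_sum_mul_star_mul hi]
  simp only [partialInnerFst, mul_assoc]

theorem isPartialIntegralSnd_of_kernel (hψ : ∀ j, MemLp (ψ j) 2 ν)
    (hB : ∀ f : Lp 𝕜 2 (μ.prod ν), ∀ᵐ z ∂μ.prod ν,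
      B f z = ∫ t, (∑ j, p j z.1 * ψ j z.2 * star (ψ j t)) * f (z.1, t) ∂ν) :
    IsPartialIntegralSnd p ψ B := fun f => by
  have hint := Measure.quasiMeasurePreserving_fst (ν := ν) |>.ae <| ae_all_iff.2 fun j =>
    ae_integrable_star_mul_snd (μ := μ) (hψ j) (Lp.memLp f)
  filter_upwards [hB f, hint] with z hz hi
  rw [hz, integral_sum_mul_star_mul hi]
  simp only [partialInnerSnd, mul_right_comm (p _ z.1) (ψ _ z.2)]

theorem IsPartialIntegralSnd.partialInnerFst_apply (hB : IsPartialIntegralSnd p ψ B)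
    (hp : ∀ j, MemLp (p j) ⊤ μ) (hψ : ∀ j, MemLp (ψ j) 2 ν) {u : α → 𝕜} (hu : MemLp u 2 μ)
    (f : Lp 𝕜 2 (μ.prod ν)) :
    partialInnerFst μ u (B f) =ᵐ[ν]
      fun y => ∑ j, (∫ s, star (u s) * (p j s * partialInnerSnd ν (ψ j) f s) ∂μ) * ψ j y := by
  refine partialInnerFst_of_ae_eq_sum (w := ψ) (fun j => ?_) (hB f)
  have hpu : MemLp (fun s => star (p j s) * u s) 2 μ := hu.mul' (hp j).star
  refine (integrable_star_mul_partialInnerSnd hpu (hψ j) (Lp.memLp f)).congr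
    (.of_forall fun s => ?_)
  simp only [star_mul, star_star, mul_assoc]

namespace IsPartialIntegralFst

variable [DecidableEq ι]

theorem partialInnerFst_apply (hA : IsPartialIntegralFst φ h A) (hφ : ∀ k, MemLp (φ k) 2 μ)
    (hφON : ∀ i j, ∫ x, star (φ i x) * φ j x ∂μ = if i = j then 1 else 0)
    (f : Lp 𝕜 2 (μ.prod ν)) (k : ι) :
    partialInnerFst μ (φ k) (A f) =ᵐ[ν] fun y => h k y * partialInnerFst μ (φ k) f y :=
  partialInnerFst_of_ae_eq_sum_orthonormal hφ hφON
    (w := fun k y => h k y * partialInnerFst μ (φ k) f y) (hA f) k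

theorem partialInnerFst_one_sub_smul_apply (hA : IsPartialIntegralFst φ h A)
    (hφ : ∀ k, MemLp (φ k) 2 μ)
    (hφON : ∀ i j, ∫ x, star (φ i x) * φ j x ∂μ = if i = j then 1 else 0)
    (τ : 𝕜) (f : Lp 𝕜 2 (μ.prod ν)) (k : ι) :
    partialInnerFst μ (φ k) ((1 - τ • A) f) =ᵐ[ν]
      fun y => (1 - τ * h k y) * partialInnerFst μ (φ k) f y := by
  filter_upwards [partialInnerFst_sub_smul (hφ k) f (A f) τ,
    hA.partialInnerFst_apply hφ hφON f k] with y hsub hAf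
  calc partialInnerFst μ (φ k) ((1 - τ • A) f) y
      = partialInnerFst μ (φ k) f y - τ * partialInnerFst μ (φ k) (A f) y := hsub
    _ = (1 - τ * h k y) * partialInnerFst μ (φ k) f y := by rw [hAf]; ring

theorem one_sub_smul_mul_eq {τ : 𝕜} (hA : IsPartialIntegralFst φ h A)
    (hS : IsPartialIntegralFst φ (fun k y => h k y / (1 - τ * h k y)) S)
    (hφ : ∀ k, MemLp (φ k) 2 μ)
    (hφON : ∀ i j, ∫ x, star (φ i x) * φ j x ∂μ = if i = j then 1 else 0)
    (hunit : IsUnit (1 - τ • A)) : (1 - τ • A) * S = A := by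
  ext1 f
  obtain ⟨g, rfl⟩ := (ContinuousLinearMap.isUnit_iff_bijective.1 hunit).surjective f
  set f := (1 - τ • A) g
  have hf := Measure.quasiMeasurePreserving_snd (μ := μ) |>.ae <| ae_all_iff.2 <|
    hA.partialInnerFst_one_sub_smul_apply hφ hφON τ g
  have hSf := Measure.quasiMeasurePreserving_snd (μ := μ) |>.ae <| ae_all_iff.2 <|
    hS.partialInnerFst_apply hφ hφON f
  refine Lp.ext ?_
  filter_upwards [hA f, hS f, hA (S f), Lp.coeFn_sub (S f) (τ • A (S f)),
    Lp.coeFn_smul τ (A (S f)), hf, hSf] with z hAf hSf_sum hASf hsub hsmul hinner_f hinner_Sf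
  change (S f - τ • A (S f) : Lp 𝕜 2 (μ.prod ν)) z = A f z
  rw [hsub, Pi.sub_apply, hsmul, Pi.smul_apply, smul_eq_mul, hAf, hSf_sum, hASf, Finset.mul_sum,
    ← Finset.sum_sub_distrib]
  refine Finset.sum_congr rfl fun k _ => ?_
  rw [hinner_Sf k, hinner_f k]
  -- The factor `1 - τ * h k y` of `hinner_f` makes both sides vanish where the division is by zero.
  rcases eq_or_ne (1 - τ * h k z.2) 0 with hzero | hne
  · simp only [hzero, zero_mul, mul_zero, sub_zero]
  · field_simp [hne]

theorem isCompactOperator_mul (hA : IsPartialIntegralFst φ h A) (hB : IsPartialIntegralSnd p ψ B)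
    (hφ : ∀ k, MemLp (φ k) 2 μ)
    (hφON : ∀ i j, ∫ x, star (φ i x) * φ j x ∂μ = if i = j then 1 else 0)
    (hψ : ∀ j, MemLp (ψ j) 2 ν) (hp : ∀ j, MemLp (p j) ⊤ μ) : IsCompactOperator (A * B) := by
  have he (q : ι × κ) : MemLp (fun z : α × β => φ q.1 z.1 * ψ q.2 z.2) 2 (μ.prod ν) :=
    memLp_mul_prod two_ne_zero ENNReal.ofNat_ne_top (hφ q.1) (hψ q.2)
  let V := Submodule.span 𝕜 (Set.range fun q => (he q).toLp)
  have hV : FiniteDimensional 𝕜 V := FiniteDimensional.span_of_finite 𝕜 (Set.finite_range _)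
  refine isCompactOperator_of_forall_mem (A * B) (V.map (A : Lp 𝕜 2 (μ.prod ν) →ₗ[𝕜] _)) fun f => ?_
  let c (q : ι × κ) : 𝕜 := ∫ s, star (φ q.1 s) * (p q.2 s * partialInnerSnd ν (ψ q.2) f s) ∂μ
  let g := ∑ q, c q • (he q).toLp
  have hg : g =ᵐ[μ.prod ν] fun z => ∑ l, φ l z.1 * ∑ j, c (l, j) * ψ j z.2 := by
    filter_upwards [coeFn_sum_smul_toLp he c] with z hz
    rw [hz]
    simp only [Fintype.sum_prod_type, Finset.mul_sum, mul_left_comm (c _)]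
  refine ⟨g, V.sum_mem fun q _ => V.smul_mem _ (Submodule.subset_span ⟨q, rfl⟩), ?_⟩
  refine hA.apply_eq_apply fun l => ?_
  have hgl : partialInnerFst μ (φ l) g =ᵐ[ν] fun y => ∑ j, c (l, j) * ψ j y :=
    partialInnerFst_of_ae_eq_sum_orthonormal hφ hφON (w := fun l y => ∑ j, c (l, j) * ψ j y) hg l
  exact hgl.trans (hB.partialInnerFst_apply hp hψ (hφ l) f).symm

end IsPartialIntegralFst

end PartialIntegral

theorem statement10_general {𝕜 α β ι κ : Type*} [RCLike 𝕜] [MeasurableSpace α] [MeasurableSpace β]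
    [Fintype ι] [DecidableEq ι] [Fintype κ]
    {μ : Measure α} {ν : Measure β} [SFinite μ] [SFinite ν]
    {φ : ι → α → 𝕜} (hφ : ∀ k, MemLp (φ k) 2 μ)
    (hφON : ∀ i j, ∫ x, star (φ i x) * φ j x ∂μ = if i = j then 1 else 0)
    {h : ι → β → 𝕜}
    {ψ : κ → β → 𝕜} (hψ : ∀ j, MemLp (ψ j) 2 ν)
    {p : κ → α → 𝕜} (hp : ∀ j, MemLp (p j) ⊤ μ)
    {T1 T2 : Lp 𝕜 2 (μ.prod ν) →L[𝕜] Lp 𝕜 2 (μ.prod ν)}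
    (hT1 : ∀ f : Lp 𝕜 2 (μ.prod ν), ∀ᵐ z ∂μ.prod ν,
      T1 f z = ∫ s, (∑ k, φ k z.1 * star (φ k s) * h k z.2) * f (s, z.2) ∂μ)
    (hT2 : ∀ f : Lp 𝕜 2 (μ.prod ν), ∀ᵐ z ∂μ.prod ν,
      T2 f z = ∫ t, (∑ j, p j z.1 * ψ j z.2 * star (ψ j t)) * f (z.1, t) ∂ν)
    {P : ι → (Lp 𝕜 2 (μ.prod ν) →L[𝕜] Lp 𝕜 2 (μ.prod ν))}
    (hP : ∀ k, ∀ f : Lp 𝕜 2 (μ.prod ν), ∀ᵐ z ∂μ.prod ν,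
      P k f z = φ k z.1 * ∫ s, star (φ k s) * f (s, z.2) ∂μ)
    {τ : 𝕜} (hτ : τ ≠ 0) (hτ1 : τ⁻¹ ∈ resolventSet 𝕜 T1) (hτ2 : τ⁻¹ ∈ resolventSet 𝕜 T2)
    {S W : Lp 𝕜 2 (μ.prod ν) →L[𝕜] Lp 𝕜 2 (μ.prod ν)}
    (hS : ∀ f : Lp 𝕜 2 (μ.prod ν), ∀ᵐ z ∂μ.prod ν,
      S f z = ∑ k, (h k z.2 / (1 - τ * h k z.2)) * P k f z)
    (hW : (1 - τ • T2) * W = S * T2)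
    (hfix : ¬ ∃ g : Lp 𝕜 2 (μ.prod ν), g ≠ 0 ∧ (τ ^ 2 • W) g = g) (g : Lp 𝕜 2 (μ.prod ν)) :
    ∃! f : Lp 𝕜 2 (μ.prod ν), f - τ • (T1 + T2) f = g := by
  have hT1' : IsPartialIntegralFst φ h T1 := isPartialIntegralFst_of_kernel hφ hT1
  have hT2' : IsPartialIntegralSnd p ψ T2 := isPartialIntegralSnd_of_kernel hψ hT2
  have hS' := isPartialIntegralFst_of_projections
    (h := fun k y => h k y / (1 - τ * h k y)) hP hS
  have hu1 : IsUnit (1 - τ • T1) := isUnit_one_sub_smul_of_inv_mem_resolventSet hτ hτ1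
  have hu2 : IsUnit (1 - τ • T2) := isUnit_one_sub_smul_of_inv_mem_resolventSet hτ hτ2
  have hu : IsUnit (1 - τ • (T1 + T2)) :=
    isUnit_one_sub_smul_add hu1 hu2 (hT1'.one_sub_smul_mul_eq hS' hφ hφON hu1) hW
      (hT1'.isCompactOperator_mul hT2' hφ hφON hψ hp)
      fun x hx => by_contra fun hne => hfix ⟨x, hne, hx⟩
  exact (ContinuousLinearMap.isUnit_iff_bijective.1 hu).existsUnique g

theorem statement10
    (a b c d : ℝ) (hab : a < b) (hcd : c < d)
    (n : ℕ) (hn : 1 ≤ n)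
    (φ : Fin n → ℝ → ℂ)
    (hφL2 : ∀ k, MemLp (φ k) 2 (muI a b))
    (hφON : ∀ i j, ∫ x, star (φ i x) * φ j x ∂(muI a b) = if i = j then 1 else 0)
    (h : Fin n → ℝ → ℝ)
    (hhmeas : ∀ k, Measurable (h k))
    (hhbdd : ∀ k, ∃ C : ℝ, ∀ᵐ y ∂(muI c d), |h k y| ≤ C)
    (m : ℕ) (hm : 1 ≤ m)
    (ψ : Fin m → ℝ → ℂ)
    (hψL2 : ∀ j, MemLp (ψ j) 2 (muI c d))
    (hψON : ∀ i j, ∫ y, star (ψ i y) * ψ j y ∂(muI c d) = if i = j then 1 else 0)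
    (p : Fin m → ℝ → ℝ)
    (hpmeas : ∀ j, Measurable (p j))
    (hpbdd : ∀ j, ∃ C : ℝ, ∀ᵐ x ∂(muI a b), |p j x| ≤ C)
    (T1 T2 : Lp ℂ 2 ((muI a b).prod (muI c d)) →L[ℂ] Lp ℂ 2 ((muI a b).prod (muI c d)))
    (hT1sa : IsSelfAdjoint T1) (hT2sa : IsSelfAdjoint T2)
    (hT1 : ∀ f : Lp ℂ 2 ((muI a b).prod (muI c d)),
      ∀ᵐ z ∂((muI a b).prod (muI c d)),
        T1 f z = ∫ s, (∑ k, φ k z.1 * star (φ k s) * (h k z.2 : ℂ)) * f (s, z.2) ∂(muI a b))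
    (hT2 : ∀ f : Lp ℂ 2 ((muI a b).prod (muI c d)),
      ∀ᵐ z ∂((muI a b).prod (muI c d)),
        T2 f z = ∫ t, (∑ j, (p j z.1 : ℂ) * ψ j z.2 * star (ψ j t)) * f (z.1, t) ∂(muI c d))
    -- the orthogonal projections `P k`
    (P : Fin n → (Lp ℂ 2 ((muI a b).prod (muI c d)) →L[ℂ] Lp ℂ 2 ((muI a b).prod (muI c d))))
    (hP : ∀ k, ∀ f : Lp ℂ 2 ((muI a b).prod (muI c d)),
      ∀ᵐ z ∂((muI a b).prod (muI c d)),
        P k f z = φ k z.1 * ∫ s, star (φ k s) * f (s, z.2) ∂(muI a b))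
    -- the operators S₁(τ)
    (S1 : ℂ → (Lp ℂ 2 ((muI a b).prod (muI c d)) →L[ℂ] Lp ℂ 2 ((muI a b).prod (muI c d))))
    (hS1 : ∀ τ : ℂ, τ ≠ 0 → τ⁻¹ ∈ resolventSet ℂ T1 → τ⁻¹ ∈ resolventSet ℂ T2 →
      ∀ f : Lp ℂ 2 ((muI a b).prod (muI c d)),
        ∀ᵐ z ∂((muI a b).prod (muI c d)),
          S1 τ f z = ∑ k, ((h k z.2 : ℂ) / (1 - τ * (h k z.2 : ℂ))) * P k f z)
    -- the operators W₁(τ) = (E-τT₂)⁻¹ S₁(τ) T₂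
    (W1 : ℂ → (Lp ℂ 2 ((muI a b).prod (muI c d)) →L[ℂ] Lp ℂ 2 ((muI a b).prod (muI c d))))
    (hW1 : ∀ τ : ℂ, τ ≠ 0 → τ⁻¹ ∈ resolventSet ℂ T1 → τ⁻¹ ∈ resolventSet ℂ T2 →
      (1 - τ • T2) * W1 τ = S1 τ * T2)
    -- the sets D(T) and R(T)
    (DT RT : Set ℂ)
    (hDT : DT = {τ : ℂ | τ ≠ 0 ∧ τ⁻¹ ∈ resolventSet ℂ T1 ∧ τ⁻¹ ∈ resolventSet ℂ T2 ∧
      ∃ g : Lp ℂ 2 ((muI a b).prod (muI c d)), g ≠ 0 ∧ (τ ^ 2 • W1 τ) g = g})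
    (hRT : RT = {τ : ℂ | τ ≠ 0 ∧ τ⁻¹ ∈ resolventSet ℂ T1 ∧ τ⁻¹ ∈ resolventSet ℂ T2 ∧
      ¬ ∃ g : Lp ℂ 2 ((muI a b).prod (muI c d)), g ≠ 0 ∧ (τ ^ 2 • W1 τ) g = g}) :
    ∀ τ ∈ RT, ∀ g : Lp ℂ 2 ((muI a b).prod (muI c d)),
      ∃! f : Lp ℂ 2 ((muI a b).prod (muI c d)), f - τ • (T1 + T2) f = g := by
  rw [hRT]
  rintro τ ⟨hτ, hτ1, hτ2, hfix⟩
  have hp (j : Fin m) : MemLp (fun x => (p j x : ℂ)) ⊤ (muI a b) := by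
    obtain ⟨C, hC⟩ := hpbdd j
    exact memLp_top_of_bound (measurable_ofReal.comp (hpmeas j)).aestronglyMeasurable C
      (by simpa using hC)
  exact statement10_general (h := fun k y => (h k y : ℂ)) (p := fun j x => (p j x : ℂ)) hφL2 hφON
    hψL2 hp hT1 hT2 hP hτ hτ1 hτ2 (hS1 τ hτ hτ1 hτ2) (hW1 τ hτ hτ1 hτ2) hfix
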